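/- Let ω be a real antisymmetric 4×4 matrix with ⋆ω = ±ω, let θ∓ be as defined, and assume det(E₄ − ωθ∓) ≠ 0. Then det(2(E₄ − ωθ∓)⁻¹ − E₄) = 1. -/

import Mathlib

open Matrix

namespace Paper

/-- The Levi-Civita symbol on four indices, as the product of signs of differences. -/
def leviCivita (k l m n : Fin 4) : ℝ :=
  ((Int.sign ((l : ℤ) - (k : ℤ)) * Int.sign ((m : ℤ) - (k : ℤ)) *
    Int.sign ((n : ℤ) - (k : ℤ)) * Int.sign ((m : ℤ) - (l : ℤ)) *
    Int.sign ((n : ℤ) - (l : ℤ)) * Int.sign ((n : ℤ) - (m : ℤ)) : ℤ) : ℝ)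

/-- The Hodge star operator on 4×4 real matrices:
`(⋆ω)_{kl} = (1/2) ∑_{m,n} ε_{klmn} ω_{mn}`. -/
noncomputable def hodgeStar (ω : Matrix (Fin 4) (Fin 4) ℝ) : Matrix (Fin 4) (Fin 4) ℝ :=
  Matrix.of fun k l => (1 / 2 : ℝ) * ∑ m : Fin 4, ∑ n : Fin 4, leviCivita k l m n * ω m n

/-- The self-dual matrix `θ⁺`. -/
def thetaPlus (θ : ℝ) : Matrix (Fin 4) (Fin 4) ℝ :=
  !![0, -θ, 0, 0; θ, 0, 0, 0; 0, 0, 0, -θ; 0, 0, θ, 0]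

/-- The anti-self-dual matrix `θ⁻`. -/
def thetaMinus (θ : ℝ) : Matrix (Fin 4) (Fin 4) ℝ :=
  !![0, -θ, 0, 0; θ, 0, 0, 0; 0, 0, 0, θ; 0, 0, -θ, 0]

/-! The Cayley transform `2 (1 - X)⁻¹ - 1` equals `(1 + X) (1 - X)⁻¹`, so it suffices that `X = ω T`
and `-X` are conjugate. Self-dual and anti-self-dual matrices form two commuting copies of the
imaginary quaternions. If `T` is anti-self-dual, then a nonzero anti-self-dual matrix orthogonal to
`T` is invertible, anticommutes with `T` and commutes with the self-dual `ω`, so it conjugates `ω T`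
to `-ω T`. -/

section CayleyTransform

variable {n R : Type*} [Fintype n] [DecidableEq n] [CommRing R]

theorem det_eq_of_semiconjBy {S X Y : Matrix n n R} (hS : IsUnit S) (h : SemiconjBy S X Y) :
    X.det = Y.det := by
  have hdet : S.det * X.det = S.det * Y.det := by
    rw [← det_mul, h.eq, det_mul, mul_comm]
  exact ((isUnit_iff_isUnit_det S).mp hS).mul_left_cancel hdet

theorem two_mul_inv_sub_one_mul {X : Matrix n n R} (hX : IsUnit (1 - X).det) :
    (2 * (1 - X)⁻¹ - 1) * (1 - X) = 1 + X := by
  rw [sub_mul, mul_assoc, nonsing_inv_mul _ hX]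
  noncomm_ring

theorem det_cayley_eq_one_of_semiconjBy_neg {S X : Matrix n n R} (hS : IsUnit S)
    (h : SemiconjBy S X (-X)) (hX : IsUnit (1 - X).det) :
    (2 * (1 - X)⁻¹ - 1).det = 1 := by
  have hconj : SemiconjBy S (1 - X) (1 + X) := by
    simpa only [sub_neg_eq_add] using (SemiconjBy.one_right S).sub_right h
  refine hX.mul_right_cancel ?_
  rw [← det_mul, two_mul_inv_sub_one_mul hX, one_mul, det_eq_of_semiconjBy hS hconj]

end CayleyTransform

section Quaternionic

variable {R : Type*} [CommRing R]

/-- The self-dual antisymmetric matrix whose first row is `(0, v)`: the coordinates in which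
self-dual matrices are a copy of the imaginary quaternions. -/
def selfDual : (Fin 3 → R) →ₗ[R] Matrix (Fin 4) (Fin 4) R where
  toFun v := !![0, v 0, v 1, v 2; -v 0, 0, v 2, -v 1; -v 1, -v 2, 0, v 0; -v 2, v 1, -v 0, 0]
  map_add' u v := by ext i j; fin_cases i <;> fin_cases j <;> simp <;> ring
  map_smul' c v := by ext i j; fin_cases i <;> fin_cases j <;> simp

/-- The anti-self-dual antisymmetric matrix whose first row is `(0, v)`: the coordinates in which
the product of anti-self-dual matrices is that of the imaginary quaternions, `u × v - u ⬝ v`. -/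
def antiSelfDual : (Fin 3 → R) →ₗ[R] Matrix (Fin 4) (Fin 4) R where
  toFun v := !![0, v 0, v 1, v 2; -v 0, 0, -v 2, v 1; -v 1, v 2, 0, -v 0; -v 2, -v 1, v 0, 0]
  map_add' u v := by ext i j; fin_cases i <;> fin_cases j <;> simp <;> ring
  map_smul' c v := by ext i j; fin_cases i <;> fin_cases j <;> simp

theorem commute_selfDual_antiSelfDual (u v : Fin 3 → R) :
    Commute (selfDual u) (antiSelfDual v) := by
  ext i j
  fin_cases i <;> fin_cases j <;>
    simp [selfDual, antiSelfDual, mul_apply, Fin.sum_univ_four] <;> ring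

theorem antiSelfDual_mul_antiSelfDual (u v : Fin 3 → R) :
    antiSelfDual u * antiSelfDual v = antiSelfDual (u ⨯₃ v) - (u ⬝ᵥ v) • 1 := by
  ext i j
  fin_cases i <;> fin_cases j <;>
    simp [antiSelfDual, mul_apply, Fin.sum_univ_succ, cross_apply, dotProduct] <;> ring

theorem isUnit_antiSelfDual {v : Fin 3 → R} (hv : IsUnit (v ⬝ᵥ v)) :
    IsUnit (antiSelfDual v) := by
  have hsq : antiSelfDual v * antiSelfDual v = -((v ⬝ᵥ v) • 1) := by
    rw [antiSelfDual_mul_antiSelfDual, cross_self, map_zero, zero_sub]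
  have hunit : IsUnit (antiSelfDual v * antiSelfDual v) := by
    rw [hsq, ← Algebra.algebraMap_eq_smul_one]
    exact (hv.map _).neg
  exact isUnit_of_mul_isUnit_left hunit

theorem semiconjBy_antiSelfDual_neg {u v : Fin 3 → R} (h : u ⬝ᵥ v = 0) :
    SemiconjBy (antiSelfDual u) (antiSelfDual v) (-antiSelfDual v) := by
  rw [SemiconjBy, neg_mul, antiSelfDual_mul_antiSelfDual, antiSelfDual_mul_antiSelfDual,
    dotProduct_comm v, h, zero_smul, sub_zero, sub_zero, ← map_neg, cross_anticomm]

theorem exists_isUnit_semiconjBy_antiSelfDual_neg {K : Type*} [Field K] [LinearOrder K]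
    [IsStrictOrderedRing K] (v : Fin 3 → K) :
    ∃ u, IsUnit (antiSelfDual u) ∧
      SemiconjBy (antiSelfDual u) (antiSelfDual v) (-antiSelfDual v) := by
  obtain ⟨u, hu, huv⟩ := exists_ne_zero_dotProduct_eq_zero v
  have huu : u ⬝ᵥ u ≠ 0 := dotProduct_self_eq_zero.not.mpr hu
  exact ⟨u, isUnit_antiSelfDual huu.isUnit, semiconjBy_antiSelfDual_neg huv⟩

theorem det_cayley_selfDual_mul_antiSelfDual_eq_one {K : Type*} [Field K] [LinearOrder K]
    [IsStrictOrderedRing K] (u v : Fin 3 → K)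
    (hdet : (1 - selfDual u * antiSelfDual v).det ≠ 0) :
    (2 * (1 - selfDual u * antiSelfDual v)⁻¹ - 1).det = 1 := by
  obtain ⟨w, hw, hwv⟩ := exists_isUnit_semiconjBy_antiSelfDual_neg v
  have hwu : SemiconjBy (antiSelfDual w) (selfDual u) (selfDual u) :=
    (commute_selfDual_antiSelfDual u w).symm
  refine det_cayley_eq_one_of_semiconjBy_neg hw ?_ hdet.isUnit
  simpa only [mul_neg] using hwu.mul_right hwv

end Quaternionic

theorem hodgeStar_eq (ω : Matrix (Fin 4) (Fin 4) ℝ) :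
    hodgeStar ω = (1 / 2 : ℝ) •
      !![0, ω 2 3 - ω 3 2, ω 3 1 - ω 1 3, ω 1 2 - ω 2 1;
         ω 3 2 - ω 2 3, 0, ω 0 3 - ω 3 0, ω 2 0 - ω 0 2;
         ω 1 3 - ω 3 1, ω 3 0 - ω 0 3, 0, ω 0 1 - ω 1 0;
         ω 2 1 - ω 1 2, ω 0 2 - ω 2 0, ω 1 0 - ω 0 1, 0] := by
  ext i j
  fin_cases i <;> fin_cases j <;>
    simp [hodgeStar, leviCivita, Fin.sum_univ_four, Int.sign_eq_one_of_pos,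
      Int.sign_eq_neg_one_of_neg] <;> ring

theorem hodgeStar_selfDual (v : Fin 3 → ℝ) : hodgeStar (selfDual v) = selfDual v := by
  rw [hodgeStar_eq]
  ext i j
  fin_cases i <;> fin_cases j <;> simp [selfDual] <;> ring

theorem hodgeStar_antiSelfDual (v : Fin 3 → ℝ) :
    hodgeStar (antiSelfDual v) = -antiSelfDual v := by
  rw [hodgeStar_eq]
  ext i j
  fin_cases i <;> fin_cases j <;> simp [antiSelfDual] <;> ring

theorem exists_selfDual_eq {ω : Matrix (Fin 4) (Fin 4) ℝ} (h : hodgeStar ω = ω) :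
    ∃ v, selfDual v = ω := by
  refine ⟨![ω 0 1, ω 0 2, ω 0 3], ?_⟩
  rw [hodgeStar_eq, ← Matrix.ext_iff] at h
  simp only [Matrix.smul_apply, of_apply, cons_val', cons_val_fin_one, smul_eq_mul,
    Fin.forall_fin_succ, cons_val_zero, cons_val_succ, Fin.succ_zero_eq_one, Fin.succ_one_eq_two,
    Fin.reduceSucc] at h
  ext i j
  fin_cases i <;> fin_cases j <;> simp [selfDual] <;> linarith

theorem exists_antiSelfDual_eq {ω : Matrix (Fin 4) (Fin 4) ℝ} (h : hodgeStar ω = -ω) :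
    ∃ v, antiSelfDual v = ω := by
  refine ⟨![ω 0 1, ω 0 2, ω 0 3], ?_⟩
  rw [hodgeStar_eq, ← Matrix.ext_iff] at h
  simp only [Matrix.smul_apply, of_apply, cons_val', cons_val_fin_one, smul_eq_mul,
    Matrix.neg_apply, Fin.forall_fin_succ, cons_val_zero, cons_val_succ, Fin.succ_zero_eq_one,
    Fin.succ_one_eq_two, Fin.reduceSucc] at h
  ext i j
  fin_cases i <;> fin_cases j <;> simp [antiSelfDual] <;> linarith

theorem hodgeStar_thetaPlus (θ : ℝ) : hodgeStar (thetaPlus θ) = thetaPlus θ := by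
  have htheta : thetaPlus θ = selfDual ![-θ, 0, 0] := by simp [thetaPlus, selfDual]
  rw [htheta, hodgeStar_selfDual]

theorem hodgeStar_thetaMinus (θ : ℝ) : hodgeStar (thetaMinus θ) = -thetaMinus θ := by
  have htheta : thetaMinus θ = antiSelfDual ![-θ, 0, 0] := by simp [thetaMinus, antiSelfDual]
  rw [htheta, hodgeStar_antiSelfDual]

theorem det_g_eq_one_general (ω T : Matrix (Fin 4) (Fin 4) ℝ)
    (hsd : (hodgeStar ω = ω ∧ hodgeStar T = -T) ∨ (hodgeStar ω = -ω ∧ hodgeStar T = T))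
    (hdet : (1 - ω * T).det ≠ 0) :
    (2 * (1 - ω * T)⁻¹ - 1).det = 1 := by
  rcases hsd with ⟨hω, hT⟩ | ⟨hω, hT⟩
  · obtain ⟨u, rfl⟩ := exists_selfDual_eq hω
    obtain ⟨v, rfl⟩ := exists_antiSelfDual_eq hT
    exact det_cayley_selfDual_mul_antiSelfDual_eq_one u v hdet
  · obtain ⟨v, rfl⟩ := exists_antiSelfDual_eq hω
    obtain ⟨u, rfl⟩ := exists_selfDual_eq hT
    rw [← (commute_selfDual_antiSelfDual u v).eq] at hdet ⊢
    exact det_cayley_selfDual_mul_antiSelfDual_eq_one u v hdet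

/-- For an (anti-)self-dual antisymmetric `ω` with `det (E₄ - ω θ∓) ≠ 0`,
`det (2(E₄ - ω θ∓)⁻¹ - E₄) = 1`. -/
theorem det_g_eq_one (θ : ℝ) (ω T : Matrix (Fin 4) (Fin 4) ℝ)
    (hanti : ωᵀ = -ω)
    (hsd : (hodgeStar ω = ω ∧ T = thetaMinus θ) ∨ (hodgeStar ω = -ω ∧ T = thetaPlus θ))
    (hdet : (1 - ω * T).det ≠ 0) :
    (2 * (1 - ω * T)⁻¹ - 1).det = 1 := by
  rcases hsd with ⟨hω, rfl⟩ | ⟨hω, rfl⟩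
  · exact det_g_eq_one_general ω _ (.inl ⟨hω, hodgeStar_thetaMinus θ⟩) hdet
  · exact det_g_eq_one_general ω _ (.inr ⟨hω, hodgeStar_thetaPlus θ⟩) hdet

end Paper
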